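/- Let (G, w, k) be a yes-instance of minimum sum vertex cover and let σ be an optimal solution of (G, w, k). For any pair of vertices u and v of G, if d(u) − k ≥ d(v) > 0, then σ(u) < σ(v). -/

import Mathlib

/-!
Write `p` and `q` for the (0-indexed) positions of `v` and `u`. The first `k` positions of a
solution of maximum cost at most `k` form a vertex cover, so a vertex outside of them has all of its
neighbours among them, hence at most `k` of them (`degree_le_of_le_pos`). As `d(u) > k`, this gives
`q < k`. If now `p < q`, exchange `u` and `v`. The maximum cost stays at most `k`, because both
positions are among the first `k`. Every edge at `v` becomes dearer by at most `q - p`, every edge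
from `u` to a vertex after `u` becomes cheaper by exactly `q - p`, and no other edge becomes dearer
(`edgeCost_swap_le`). At most `q ≤ k - 1` neighbours of `u` precede it, so at least `d(v) + 1`
follow it, and the total cost strictly decreases, contradicting optimality.
-/

/-- The 1-indexed cost of an edge under an ordering `σ` of the vertices. -/
def edgeCost {V : Type*} [Fintype V] (σ : V ≃ Fin (Fintype.card V)) : Sym2 V → ℕ :=
  Sym2.lift ⟨fun u v => min ((σ u : ℕ) + 1) ((σ v : ℕ) + 1), fun u v => by
    simp [min_comm]⟩

/-- The total cost of a solution `σ`: the sum of the costs of all edges. -/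
def totalCost {V : Type*} [Fintype V] [DecidableEq V] (G : SimpleGraph V)
    [DecidableRel G.Adj] (σ : V ≃ Fin (Fintype.card V)) : ℕ :=
  ∑ e ∈ G.edgeFinset, edgeCost σ e

/-- The maximum cost of the solution `σ` is at most `k`. -/
def MaxCostLe {V : Type*} [Fintype V] (G : SimpleGraph V)
    (σ : V ≃ Fin (Fintype.card V)) (k : ℕ) : Prop :=
  ∀ ⦃u v : V⦄, G.Adj u v → min ((σ u : ℕ) + 1) ((σ v : ℕ) + 1) ≤ k

/-- A solution `σ` is feasible for `(G, w, k)` if its maximum cost is at most `k`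
and its total cost is at most `w`. -/
def Feasible {V : Type*} [Fintype V] [DecidableEq V] (G : SimpleGraph V)
    [DecidableRel G.Adj] (σ : V ≃ Fin (Fintype.card V)) (w k : ℕ) : Prop :=
  MaxCostLe G σ k ∧ totalCost G σ ≤ w

/-- `(G, w, k)` is a yes-instance if it admits a feasible solution. -/
def YesInstance {V : Type*} [Fintype V] [DecidableEq V] (G : SimpleGraph V)
    [DecidableRel G.Adj] (w k : ℕ) : Prop :=
  ∃ σ : V ≃ Fin (Fintype.card V), Feasible G σ w k

/-- A solution `σ` is optimal for parameter `k` if its maximum cost is at most `k`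
and its total cost is minimum among all solutions with maximum cost at most `k`. -/
def Optimal {V : Type*} [Fintype V] [DecidableEq V] (G : SimpleGraph V)
    [DecidableRel G.Adj] (σ : V ≃ Fin (Fintype.card V)) (k : ℕ) : Prop :=
  MaxCostLe G σ k ∧
    ∀ σ' : V ≃ Fin (Fintype.card V), MaxCostLe G σ' k → totalCost G σ ≤ totalCost G σ'

/-- `r G σ i` is the number of edges of cost `i` (where the position `i` is 0-indexed as
an element of `Fin n`): the number of neighbors of the vertex at position `i` that occur
at later positions. -/
def r {V : Type*} [Fintype V] (G : SimpleGraph V) [DecidableRel G.Adj]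
    (σ : V ≃ Fin (Fintype.card V)) (i : Fin (Fintype.card V)) : ℕ :=
  ((G.neighborFinset (σ.symm i)).filter fun x => i < σ x).card

@[simp]
lemma edgeCost_mk {V : Type*} [Fintype V] (σ : V ≃ Fin (Fintype.card V)) (a b : V) :
    edgeCost σ s(a, b) = min ((σ a : ℕ) + 1) ((σ b : ℕ) + 1) := rfl

/-- At most `m` vertices occupy the first `m` positions. -/
lemma card_filter_pos_lt_le {V : Type*} [Fintype V] (σ : V ≃ Fin (Fintype.card V))
    (s : Finset V) (m : ℕ) : (s.filter fun x => (σ x : ℕ) < m).card ≤ m := by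
  have h := Finset.card_le_card_of_injOn (s := s.filter fun x => (σ x : ℕ) < m)
    (t := Finset.range m) (fun x => (σ x : ℕ))
    (fun x hx => by simpa using (Finset.mem_filter.1 hx).2)
    (fun x _ y _ hxy => σ.injective (Fin.ext hxy))
  simpa using h

/-- The first `k` positions form a vertex cover, so a vertex outside of them has degree at
most `k`. -/
lemma degree_le_of_le_pos {V : Type*} [Fintype V] (G : SimpleGraph V)
    [DecidableRel G.Adj] {σ : V ≃ Fin (Fintype.card V)} {k : ℕ} (h : MaxCostLe G σ k) {u : V}
    (hu : k ≤ (σ u : ℕ)) : G.degree u ≤ k := by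
  have hall : ((G.neighborFinset u).filter fun x => (σ x : ℕ) < k) = G.neighborFinset u := by
    refine Finset.filter_true_of_mem fun x hx => ?_
    have := h ((G.mem_neighborFinset u x).1 hx)
    omega
  have := card_filter_pos_lt_le σ (G.neighborFinset u) k
  rwa [hall, G.card_neighborFinset_eq_degree] at this

/-- The edges from `u` to the neighbours of `u` placed after `u`. -/
def laterEdges {V : Type*} [Fintype V] [DecidableEq V] (G : SimpleGraph V)
    [DecidableRel G.Adj] (σ : V ≃ Fin (Fintype.card V)) (u : V) : Finset (Sym2 V) :=
  ((G.neighborFinset u).filter fun x => ¬ (σ x : ℕ) < σ u).image fun x => s(u, x)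

lemma degree_le_pos_add_card_laterEdges {V : Type*} [Fintype V] [DecidableEq V]
    (G : SimpleGraph V) [DecidableRel G.Adj] (σ : V ≃ Fin (Fintype.card V)) (u : V) :
    G.degree u ≤ σ u + (laterEdges G σ u).card := by
  rw [laterEdges, Finset.card_image_of_injective _ fun x y h => Sym2.congr_right.1 h]
  have h1 := Finset.card_filter_add_card_filter_not (s := G.neighborFinset u)
    (fun x => (σ x : ℕ) < σ u)
  have h2 := card_filter_pos_lt_le σ (G.neighborFinset u) (σ u)
  rw [G.card_neighborFinset_eq_degree] at h1
  omega

/-- Edgewise effect of exchanging `u` and an earlier vertex `v`: an edge at `v` becomes dearer by at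
most `σ u - σ v`, an edge from `u` to a later vertex becomes cheaper by at least as much, and no
other edge becomes dearer. -/
lemma edgeCost_swap_le {V : Type*} [Fintype V] [DecidableEq V] (G : SimpleGraph V)
    [DecidableRel G.Adj] (σ : V ≃ Fin (Fintype.card V)) {u v : V} (huv : σ v < σ u)
    {e : Sym2 V} (he : e ∈ G.edgeFinset) :
    edgeCost ((Equiv.swap u v).trans σ) e
        + (if e ∈ laterEdges G σ u then (σ u - σ v : ℕ) else 0)
      ≤ edgeCost σ e + (if e ∈ G.incidenceFinset v then (σ u - σ v : ℕ) else 0) := by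
  have hlt : (σ v : ℕ) < σ u := huv
  have hne : u ≠ v := by rintro rfl; exact lt_irrefl _ huv
  induction e with
  | _ a b =>
  have hab : G.Adj a b := by simpa using he
  have hab' := hab.ne
  have hL : s(a, b) ∈ laterEdges G σ u →
      (a = u ∧ (σ u : ℕ) ≤ σ b) ∨ (b = u ∧ (σ u : ℕ) ≤ σ a) := by
    simp only [laterEdges, Finset.mem_image, Finset.mem_filter, Sym2.eq_iff]
    rintro ⟨x, ⟨-, hx⟩, ⟨rfl, rfl⟩ | ⟨rfl, rfl⟩⟩ <;> simp_all
  have hI : s(a, b) ∈ G.incidenceFinset v ↔ a = v ∨ b = v := by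
    simp [SimpleGraph.mem_incidenceFinset, SimpleGraph.mk'_mem_incidenceSet_iff, hab, eq_comm]
  simp only [edgeCost_mk, Equiv.trans_apply, Equiv.swap_apply_def, hI]
  by_cases hA : s(a, b) ∈ laterEdges G σ u
  · have := hL hA
    rw [if_pos hA]
    grind
  · rw [if_neg hA]
    grind

lemma totalCost_swap_le {V : Type*} [Fintype V] [DecidableEq V] (G : SimpleGraph V)
    [DecidableRel G.Adj] (σ : V ≃ Fin (Fintype.card V)) {u v : V} (huv : σ v < σ u) :
    totalCost G ((Equiv.swap u v).trans σ) + (laterEdges G σ u).card * (σ u - σ v : ℕ)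
      ≤ totalCost G σ + G.degree v * (σ u - σ v : ℕ) := by
  have h := Finset.sum_le_sum fun e (he : e ∈ G.edgeFinset) => edgeCost_swap_le G σ huv he
  have hL : laterEdges G σ u ⊆ G.edgeFinset := by
    intro e he
    obtain ⟨x, hx, rfl⟩ := Finset.mem_image.1 he
    simpa using (Finset.mem_filter.1 hx).1
  have hI : G.incidenceFinset v ⊆ G.edgeFinset := G.incidenceFinset_subset v
  simpa only [totalCost, Finset.sum_add_distrib, Finset.sum_ite_mem, Finset.inter_eq_right.2 hL,
    Finset.inter_eq_right.2 hI, Finset.sum_const, smul_eq_mul,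
    G.card_incidenceFinset_eq_degree] using h

/-- Exchanging two vertices among the first `k` positions keeps the maximum cost at most `k`. -/
lemma MaxCostLe.swap {V : Type*} [Fintype V] [DecidableEq V] {G : SimpleGraph V}
    {σ : V ≃ Fin (Fintype.card V)} {k : ℕ} (h : MaxCostLe G σ k) {u v : V}
    (hu : (σ u : ℕ) < k) (hv : (σ v : ℕ) < k) :
    MaxCostLe G ((Equiv.swap u v).trans σ) k := by
  intro a b hab
  have := h hab
  simp only [Equiv.trans_apply, Equiv.swap_apply_def]
  grind

/-- in an optimal solution `σ` of a yes-instance `(G, w, k)`,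
if `d(u) − k ≥ d(v) > 0` then `σ(u) < σ(v)`. -/
theorem statement5 {V : Type*} [Fintype V] [DecidableEq V] (G : SimpleGraph V)
    [DecidableRel G.Adj] (w k : ℕ) (σ : V ≃ Fin (Fintype.card V))
    (hyes : YesInstance G w k) (hopt : Optimal G σ k) (u v : V)
    (hd : G.degree v + k ≤ G.degree u) (hv : 0 < G.degree v) :
    σ u < σ v := by
  obtain ⟨hmax, hmin⟩ := hopt
  -- An edge at `v` has cost at least `1`, so `k` is positive.
  have hk : 0 < k := by
    obtain ⟨x, hx⟩ := (G.degree_pos_iff_exists_adj v).1 hv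
    have := hmax hx
    omega
  have hu : (σ u : ℕ) < k := by
    by_contra hu
    have := degree_le_of_le_pos G hmax (not_lt.1 hu)
    omega
  by_contra hlt
  have hne : u ≠ v := by rintro rfl; omega
  have hvu : σ v < σ u := lt_of_le_of_ne (not_lt.1 hlt) fun h => hne (σ.injective h.symm)
  have hpos : (σ v : ℕ) < σ u := hvu
  have h1 := hmin _ (hmax.swap hu (hpos.trans hu))
  have h2 := totalCost_swap_le G σ hvu
  have h3 := degree_le_pos_add_card_laterEdges G σ u
  have h4 : G.degree v < (laterEdges G σ u).card := by omega
  have h5 := Nat.mul_lt_mul_of_pos_right h4 (Nat.sub_pos_of_lt hpos)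
  omega
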